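/- Let B ⊆ ℝⁿ be the open ball of radius r centered at 0, and let h : B̄ → ℝⁿ be continuous with ⟨h(x), x⟩ > 0 for all x ∈ B̄ \ {0}. If γ : [0,∞) → B is a differentiable curve satisfying γ′(t) = −h(γ(t)) for all t ≥ 0, then lim_{t→∞} γ(t) = 0. -/

import Mathlib

open Set Filter Metric
open scoped Topology

/-!
Along a solution of `γ' = -h γ` the function `V = ‖·‖²` decreases at rate `2 ⟪h γ, γ⟫`. On the
compact part of the domain where `V ≥ ε` this rate is bounded below by a positive constant, so `γ`
cannot stay there forever; once `V < ε`, monotonicity keeps it so.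
-/

section Real

variable {f f' : ℝ → ℝ} {a : ℝ}

theorem antitoneOn_add_mul_of_hasDerivWithinAt_le_neg
    (hf : ∀ t ∈ Ici a, HasDerivWithinAt f (f' t) (Ici a) t) {c : ℝ}
    (hc : ∀ t ∈ Ici a, f' t ≤ -c) : AntitoneOn (fun t => f t + c * t) (Ici a) := by
  have hderiv : ∀ t ∈ Ici a,
      HasDerivWithinAt (fun t => f t + c * t) (f' t + c) (Ici a) t := fun t ht => by
    simpa only [id, mul_one] using (hf t ht).fun_add ((hasDerivWithinAt_id t _).const_mul c)
  refine antitoneOn_of_hasDerivWithinAt_nonpos (convex_Ici a)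
    (fun t ht => (hderiv t ht).continuousWithinAt)
    (fun t ht => (hderiv t (interior_subset ht)).mono interior_subset) fun t ht => ?_
  linarith [hc t (interior_subset ht)]

theorem exists_lt_of_hasDerivWithinAt_le_neg
    (hf : ∀ t ∈ Ici a, HasDerivWithinAt f (f' t) (Ici a) t) {c : ℝ} (hc : 0 < c)
    (hf' : ∀ t ∈ Ici a, f' t ≤ -c) (b : ℝ) : ∃ t ∈ Ici a, f t < b := by
  have hlinear : Tendsto (fun t => c * t) atTop atTop := tendsto_id.const_mul_atTop hc
  obtain ⟨t, ht, hat⟩ :=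
    ((hlinear.eventually_gt_atTop (f a + c * a - b)).and (eventually_ge_atTop a)).exists
  have hdecay : f t + c * t ≤ f a + c * a :=
    antitoneOn_add_mul_of_hasDerivWithinAt_le_neg hf hf' self_mem_Ici hat hat
  exact ⟨t, hat, by linarith⟩

theorem tendsto_zero_of_hasDerivWithinAt_le_neg
    (hf : ∀ t ∈ Ici a, HasDerivWithinAt f (f' t) (Ici a) t)
    (hf_nonneg : ∀ t ∈ Ici a, 0 ≤ f t) (hf'_nonpos : ∀ t ∈ Ici a, f' t ≤ 0)
    (hf' : ∀ ε > 0, ∃ c > 0, ∀ t ∈ Ici a, ε ≤ f t → f' t ≤ -c) :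
    Tendsto f atTop (𝓝 0) := by
  have hanti : AntitoneOn f (Ici a) := by
    simpa only [zero_mul, add_zero] using
      antitoneOn_add_mul_of_hasDerivWithinAt_le_neg hf (c := 0) (by simpa using hf'_nonpos)
  have hsmall : ∀ ε > 0, ∃ s ∈ Ici a, f s < ε := fun ε hε => by
    by_contra! hlarge
    obtain ⟨c, hc, hrate⟩ := hf' ε hε
    obtain ⟨t, ht, hlt⟩ := exists_lt_of_hasDerivWithinAt_le_neg hf hc
      (fun t ht => hrate t ht (hlarge t ht)) ε
    exact (hlarge t ht).not_gt hlt
  refine tendsto_order.2 ⟨fun b hb => ?_, fun ε hε => ?_⟩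
  · filter_upwards [eventually_ge_atTop a] with t ht using hb.trans_le (hf_nonneg t ht)
  · obtain ⟨s, hs, hsε⟩ := hsmall ε hε
    filter_upwards [eventually_ge_atTop s] with t hst
    exact (hanti hs (le_trans hs hst) hst).trans_lt hsε

end Real

section Lyapunov

variable {X : Type*} [TopologicalSpace X] {K : Set X} {V W : X → ℝ}

theorem exists_pos_forall_le_of_isCompact (hK : IsCompact K) (hV : ContinuousOn V K)
    (hW : ContinuousOn W K) {ε : ℝ} (hpos : ∀ x ∈ K, ε ≤ V x → 0 < W x) :
    ∃ c > 0, ∀ x ∈ K, ε ≤ V x → c ≤ W x := by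
  have hcompact : IsCompact (V ⁻¹' Ici ε ∩ K) := by
    obtain ⟨C, hC, hCK⟩ := continuousOn_iff_isClosed.1 hV (Ici ε) isClosed_Ici
    exact hCK ▸ hK.inter_left hC
  obtain ⟨c, hc, hle⟩ := hcompact.exists_forall_le' (hW.mono inter_subset_right)
    (a := 0) fun x hx => hpos x hx.2 hx.1
  exact ⟨c, hc, fun x hxK hxε => hle x ⟨hxε, hxK⟩⟩

theorem tendsto_lyapunov_comp_zero (hK : IsCompact K) (hV : ContinuousOn V K)
    (hW : ContinuousOn W K) (hV_nonneg : ∀ x ∈ K, 0 ≤ V x) (hW_nonneg : ∀ x ∈ K, 0 ≤ W x)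
    (hW_pos : ∀ x ∈ K, 0 < V x → 0 < W x) {γ : ℝ → X} {a : ℝ} (hγK : ∀ t ∈ Ici a, γ t ∈ K)
    (hVγ : ∀ t ∈ Ici a, HasDerivWithinAt (fun t => V (γ t)) (-W (γ t)) (Ici a) t) :
    Tendsto (fun t => V (γ t)) atTop (𝓝 0) := by
  refine tendsto_zero_of_hasDerivWithinAt_le_neg hVγ (fun t ht => hV_nonneg _ (hγK t ht))
    (fun t ht => neg_nonpos.2 (hW_nonneg _ (hγK t ht))) fun ε hε => ?_
  obtain ⟨c, hc, hle⟩ := exists_pos_forall_le_of_isCompact hK hV hW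
    fun x hx hxε => hW_pos x hx (hε.trans_le hxε)
  exact ⟨c, hc, fun t ht htε => neg_le_neg (hle _ (hγK t ht) htε)⟩

end Lyapunov

theorem stmt_9_general {E : Type*} [NormedAddCommGroup E] [InnerProductSpace ℝ E]
    {K : Set E} (hK : IsCompact K) {h : E → E} (hh : ContinuousOn h K)
    (hinner : ∀ x ∈ K, x ≠ 0 → 0 < inner ℝ (h x) x) {γ : ℝ → E} {a : ℝ}
    (hγK : ∀ t ∈ Ici a, γ t ∈ K)
    (hγ' : ∀ t ∈ Ici a, HasDerivWithinAt γ (-h (γ t)) (Ici a) t) :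
    Tendsto γ atTop (𝓝 0) := by
  have hinner_nonneg : ∀ x ∈ K, 0 ≤ inner ℝ (h x) x := fun x hx => by
    obtain rfl | hx0 := eq_or_ne x 0
    · exact (inner_zero_right _).ge
    · exact (hinner x hx hx0).le
  have hnorm_sq_deriv : ∀ t ∈ Ici a,
      HasDerivWithinAt (fun t => ‖γ t‖ ^ 2) (-(2 * inner ℝ (h (γ t)) (γ t))) (Ici a) t :=
    fun t ht => by
      simpa only [inner_neg_right, real_inner_comm, mul_neg] using (hγ' t ht).norm_sq
  have hnorm_sq : Tendsto (fun t => ‖γ t‖ ^ 2) atTop (𝓝 0) :=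
    tendsto_lyapunov_comp_zero (V := fun x => ‖x‖ ^ 2) (W := fun x => 2 * inner ℝ (h x) x)
      hK (by fun_prop) (continuousOn_const.mul (hh.inner continuousOn_id))
      (fun x _ => sq_nonneg ‖x‖) (fun x hx => mul_nonneg zero_le_two (hinner_nonneg x hx))
      (fun x hx hx0 => mul_pos two_pos (hinner x hx fun hzero => by simp [hzero] at hx0))
      hγK hnorm_sq_deriv
  refine tendsto_zero_iff_norm_tendsto_zero.2 ?_
  simpa only [Real.sqrt_sq (norm_nonneg _), Real.sqrt_zero] using hnorm_sq.sqrt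

/-- The Lyapunov function `‖x‖²` forces forward convergence to the singularity:
if `h` is continuous on the closed ball `B̄(0,r)` with `⟨h(x), x⟩ > 0` for
`x ∈ B̄ \ {0}`, and `γ : [0,∞) → B(0,r)` solves `γ′ = -h(γ)`, then `γ(t) → 0`
as `t → ∞`. -/
theorem stmt_9 (n : ℕ) (r : ℝ) (hr : 0 < r)
    (h : EuclideanSpace ℝ (Fin n) → EuclideanSpace ℝ (Fin n))
    (hh : ContinuousOn h (closedBall 0 r))
    (hinner : ∀ x ∈ closedBall (0 : EuclideanSpace ℝ (Fin n)) r, x ≠ 0 →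
      0 < (inner ℝ (h x) x : ℝ))
    (γ : ℝ → EuclideanSpace ℝ (Fin n))
    (hγB : ∀ t : ℝ, 0 ≤ t → γ t ∈ ball (0 : EuclideanSpace ℝ (Fin n)) r)
    (hγ' : ∀ t : ℝ, 0 ≤ t → HasDerivAt γ (-h (γ t)) t) :
    Tendsto γ atTop (𝓝 0) :=
  stmt_9_general (isCompact_closedBall 0 r) hh hinner
    (fun t ht => ball_subset_closedBall (hγB t ht)) fun t ht => (hγ' t ht).hasDerivWithinAt
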